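/- arXiv:math/0204014 — 2 statements merged into one kernel-verified Lean document; each statement's English description precedes it below -/
import Mathlib

section
/- Let u be a KdV admissible solution. Then for every t ∈ ℝ, ∫_ℝ [ (∂ₓ²u(t,x))² − (5/3)·u(t,x)·(∂ₓu(t,x))² + (5/36)·u(t,x)⁴ ] dx = ∫_ℝ [ (∂ₓ²u(0,x))² − (5/3)·u(0,x)·(∂ₓu(0,x))² + (5/36)·u(0,x)⁴ ] dx; that is, the next conserved integral of the KdV hierarchy after the Hamiltonian is constant in time. -/
open MeasureTheory

noncomputable section

/-- A KdV admissible solution: a smooth real `u(t,x)` solving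
`∂ₜu + ∂ₓ³u + u ∂ₓu = 0` on `ℝ × ℝ`, Schwartz in `x` locally uniformly in `t`. -/
structure KdVSolution where
  u : ℝ → ℝ → ℝ
  smooth : ContDiff ℝ (⊤ : ℕ∞) (Function.uncurry u)
  eqn : ∀ t x : ℝ, deriv (fun t' => u t' x) t + iteratedDeriv 3 (fun y => u t y) x
      + u t x * deriv (fun y => u t y) x = 0
  decay : ∀ a b : ℝ, ∀ j k n : ℕ, ∃ B : ℝ, ∀ t ∈ Set.Icc a b, ∀ x : ℝ,
      |x| ^ n * |iteratedDeriv j (fun t' => iteratedDeriv k (fun y => u t' y) x) t| ≤ B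

/-!
Along a solution of an evolution equation `∂ₜu = K(u, ∂ₓu, ∂ₓ²u, …)` with `K` a polynomial, `∂ₓ`
and `∂ₜ` act on polynomial expressions in the jet of `u` as two derivations of the ring of
differential polynomials: the total derivative, which sends `∂ₓᵏu` to `∂ₓᵏ⁺¹u`, and the evolution
derivation, which sends `∂ₓᵏu` to the `k`-th total derivative of `K`. If the latter maps a density
to the total derivative of a flux, then `∂ₜ density = ∂ₓ flux` along every solution, and for a
decaying solution the integral of the density is constant: differentiation under the integral sign
leaves `∫ ∂ₓ flux = 0`. Conservation thus reduces to one identity between differential polynomials.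
-/

open Filter Topology MvPolynomial
open scoped ContDiff

section Decay

variable {T : Type*} [TopologicalSpace T] {f g : T → ℝ → ℝ}

/-- Decay `f t x = O(1 / (1 + x²))`, locally uniformly in `t`: integrable in `x`, and stable under
products. The factor `⊤` of the filter makes the bound hold for every `x`, not only for large
`x`. -/
def LocUnifDecay (f : T → ℝ → ℝ) : Prop :=
  ∀ t, Function.uncurry f =O[𝓝 t ×ˢ ⊤] fun p => (1 + p.2 ^ 2)⁻¹

namespace LocUnifDecay

theorem zero : LocUnifDecay fun (_ : T) (_ : ℝ) => (0 : ℝ) :=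
  fun _ => Asymptotics.isBigO_zero _ _

theorem add (hf : LocUnifDecay f) (hg : LocUnifDecay g) :
    LocUnifDecay fun t x => f t x + g t x :=
  fun t => (hf t).add (hg t)

theorem const_mul (c : ℝ) (hf : LocUnifDecay f) : LocUnifDecay fun t x => c * f t x :=
  fun t => (hf t).const_mul_left c

theorem mul (hf : LocUnifDecay f) (hg : LocUnifDecay g) :
    LocUnifDecay fun t x => f t x * g t x := by
  intro t
  have weight_bounded : (fun p : T × ℝ => (1 + p.2 ^ 2)⁻¹) =O[𝓝 t ×ˢ ⊤] fun _ => (1 : ℝ) :=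
    .of_bound' <| .of_forall fun p => by
      rw [norm_one, Real.norm_of_nonneg (by positivity)]
      exact inv_le_one_of_one_le₀ (by linarith [sq_nonneg p.2])
  exact (((hf t).trans weight_bounded).mul (hg t)).congr_right fun p => one_mul _

theorem exists_integrable_bound (hf : LocUnifDecay f) (t : T) :
    ∃ bound : ℝ → ℝ, Integrable bound ∧ ∀ᶠ s in 𝓝 t, ∀ x, ‖f s x‖ ≤ bound x := by
  obtain ⟨B, hB⟩ := (hf t).bound
  rw [← principal_univ, eventually_prod_principal_iff] at hB
  exact ⟨fun x => B * ‖(1 + x ^ 2)⁻¹‖, integrable_inv_one_add_sq.norm.const_mul B,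
    hB.mono fun s hs x => hs x trivial⟩

theorem integrable (hf : LocUnifDecay f) {t : T} (hft : AEStronglyMeasurable (f t)) :
    Integrable (f t) := by
  obtain ⟨bound, hbound, hle⟩ := hf.exists_integrable_bound t
  exact hbound.mono' hft (.of_forall hle.self_of_nhds)

theorem eval_sub_constantCoeff {σ : Type*} {c : T → ℝ → σ → ℝ}
    (hc : ∀ i, LocUnifDecay fun t x => c t x i) (p : MvPolynomial σ ℝ) :
    LocUnifDecay fun t x => eval (c t x) p - constantCoeff p := by
  induction p using MvPolynomial.induction_on with
  | C a => simpa using zero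
  | add p q hp hq => simpa [add_sub_add_comm] using hp.add hq
  | mul_X p i hp =>
    simpa [sub_mul] using (hp.mul (hc i)).add ((hc i).const_mul (constantCoeff p))

end LocUnifDecay

end Decay

theorem integral_eq_of_hasDerivAt_flux {V : Type*} [NormedAddCommGroup V] [NormedSpace ℝ V]
    [CompleteSpace V] {E F G : ℝ → ℝ → V} (hE : ∀ t, Integrable (E t)) (hF : ∀ t, Integrable (F t))
    (hG : ∀ t, ∃ bound : ℝ → ℝ, Integrable bound ∧ ∀ᶠ s in 𝓝 t, ∀ x, ‖G s x‖ ≤ bound x)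
    (hEt : ∀ t x, HasDerivAt (fun s => E s x) (G t x) t)
    (hFx : ∀ t x, HasDerivAt (F t) (G t x) x) (t s : ℝ) :
    ∫ x, E t x = ∫ x, E s x := by
  have hasDerivAt_integral (r : ℝ) : HasDerivAt (fun r' => ∫ x, E r' x) 0 r := by
    obtain ⟨bound, hbound, hle⟩ := hG r
    have hGm : AEStronglyMeasurable (G r) := by
      rw [← funext fun x => (hFx r x).deriv]
      exact aestronglyMeasurable_deriv _ _
    have integral_G : ∫ x, G r x = 0 :=
      integral_eq_zero_of_hasDerivAt_of_integrable (hFx r)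
        (hbound.mono' hGm (.of_forall hle.self_of_nhds)) (hF r)
    rw [← integral_G]
    exact (hasDerivAt_integral_of_dominated_loc_of_deriv_le hle
      (.of_forall fun r' => (hE r').aestronglyMeasurable) (hE r) hGm
      (.of_forall fun x r' hr' => hr' x) hbound (.of_forall fun x r' _ => hEt r' x)).2
  exact is_const_of_deriv_eq_zero (fun r => (hasDerivAt_integral r).differentiableAt)
    (fun r => (hasDerivAt_integral r).deriv) t s

section PartialDeriv

variable {𝕜 E V : Type*} [NormedAddCommGroup E] [NormedAddCommGroup V]

section NontriviallyNormedField

variable [NontriviallyNormedField 𝕜] [NormedSpace 𝕜 E] [NormedSpace 𝕜 V]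

theorem hasDerivAt_comp_prodMk_left {g : 𝕜 × 𝕜 → V} {t x : 𝕜} (hg : DifferentiableAt 𝕜 g (t, x)) :
    HasDerivAt (fun s => g (s, x)) (fderiv 𝕜 g (t, x) (1, 0)) t :=
  hg.hasFDerivAt.comp_hasDerivAt t ((hasDerivAt_id t).prodMk (hasDerivAt_const t x))

theorem hasDerivAt_comp_prodMk_right {g : 𝕜 × 𝕜 → V} {t x : 𝕜} (hg : DifferentiableAt 𝕜 g (t, x)) :
    HasDerivAt (fun y => g (t, y)) (fderiv 𝕜 g (t, x) (0, 1)) x :=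
  hg.hasFDerivAt.comp_hasDerivAt x ((hasDerivAt_const x t).prodMk (hasDerivAt_id x))

theorem contDiff_uncurry_iteratedDeriv {f : E → 𝕜 → V} {m : WithTop ℕ∞} (k : ℕ)
    (hf : ContDiff 𝕜 (m + k) (Function.uncurry f)) :
    ContDiff 𝕜 m (Function.uncurry fun t x => iteratedDeriv k (f t) x) := by
  induction k generalizing m with
  | zero => simpa [Function.uncurry_def] using hf
  | succ k ih =>
    have hk : ContDiff 𝕜 (m + 1) (Function.uncurry fun t x => iteratedDeriv k (f t) x) :=
      ih (by rwa [add_assoc, add_comm 1, ← Nat.cast_add_one])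
    simp only [iteratedDeriv_succ, ← fderiv_apply_one_eq_deriv]
    exact ContDiff.fderiv_apply (f := fun p : E × 𝕜 => iteratedDeriv k (f p.1))
      (hk.comp (by fun_prop : ContDiff 𝕜 (m + 1) fun q : (E × 𝕜) × 𝕜 => (q.1.1, q.2)))
      contDiff_snd contDiff_const le_rfl

end NontriviallyNormedField

theorem hasDerivAt_of_mixed_partial [RCLike 𝕜] [NormedSpace 𝕜 V] {f G H : 𝕜 → 𝕜 → V}
    (hf : ContDiff 𝕜 2 (Function.uncurry f)) (hG : ∀ t x, HasDerivAt (fun s => f s x) (G t x) t)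
    (hH : ∀ t x, HasDerivAt (f t) (H t x) x) {K : V} {t x : 𝕜} (hK : HasDerivAt (G t) K x) :
    HasDerivAt (fun s => H s x) K t := by
  let F := Function.uncurry f
  have hF : Differentiable 𝕜 F := hf.differentiable two_ne_zero
  have hF' : Differentiable 𝕜 (fderiv 𝕜 F) :=
    (hf.fderiv_right (m := 1) (by norm_num)).differentiable one_ne_zero
  have eq_G : G t = fun y => fderiv 𝕜 F (t, y) (1, 0) :=
    funext fun y => (hG t y).unique (hasDerivAt_comp_prodMk_left (hF (t, y)))
  have eq_H : (fun s => H s x) = fun s => fderiv 𝕜 F (s, x) (0, 1) :=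
    funext fun s => (hH s x).unique (hasDerivAt_comp_prodMk_right (hF (s, x)))
  have hasDerivAt_G : HasDerivAt (G t) (fderiv 𝕜 (fderiv 𝕜 F) (t, x) (0, 1) (1, 0)) x := by
    simpa [eq_G] using (hasDerivAt_comp_prodMk_right (hF' (t, x))).clm_apply
      (hasDerivAt_const x ((1, 0) : 𝕜 × 𝕜))
  have hasDerivAt_H :
      HasDerivAt (fun s => H s x) (fderiv 𝕜 (fderiv 𝕜 F) (t, x) (1, 0) (0, 1)) t := by
    simpa [eq_H] using (hasDerivAt_comp_prodMk_left (hF' (t, x))).clm_apply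
      (hasDerivAt_const t ((0, 1) : 𝕜 × 𝕜))
  have symm : IsSymmSndFDerivAt 𝕜 F (t, x) := hf.contDiffAt.isSymmSndFDerivAt (by simp)
  rwa [hK.unique hasDerivAt_G, symm (0, 1) (1, 0)]

end PartialDeriv

section DifferentialPolynomial

variable {R : Type*} [CommSemiring R]

/-- The total derivative `∂ₓ` on differential polynomials, where `X k` stands for `∂ₓᵏu`. -/
def totalDeriv : Derivation R (MvPolynomial ℕ R) (MvPolynomial ℕ R) :=
  mkDerivation R fun k => X (k + 1)

/-- The derivation by which `∂ₜ` acts on differential polynomials along solutions of the evolution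
equation `∂ₜu = K(u, ∂ₓu, …)`: it sends `u` to `K` and commutes with `totalDeriv`. -/
def evolutionDeriv (K : MvPolynomial ℕ R) : Derivation R (MvPolynomial ℕ R) (MvPolynomial ℕ R) :=
  mkDerivation R fun k => totalDeriv^[k] K

theorem totalDeriv_X (k : ℕ) : totalDeriv (X k : MvPolynomial ℕ R) = X (k + 1) :=
  mkDerivation_X R _ k

theorem evolutionDeriv_X (K : MvPolynomial ℕ R) (k : ℕ) :
    evolutionDeriv K (X k) = totalDeriv^[k] K :=
  mkDerivation_X R _ k

theorem constantCoeff_totalDeriv (p : MvPolynomial ℕ R) : constantCoeff (totalDeriv p) = 0 := by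
  induction p using MvPolynomial.induction_on with
  | C a => simp
  | add p q hp hq => simp [hp, hq]
  | mul_X p i _ => simp [totalDeriv_X]

end DifferentialPolynomial

section Jet

variable {𝕜 : Type*}

theorem hasDerivAt_eval_mkDerivation [NontriviallyNormedField 𝕜] {σ : Type*} {c : 𝕜 → σ → 𝕜}
    {q : σ → MvPolynomial σ 𝕜} {x : 𝕜}
    (hc : ∀ i, HasDerivAt (fun y => c y i) (eval (c x) (q i)) x) (p : MvPolynomial σ 𝕜) :
    HasDerivAt (fun y => eval (c y) p) (eval (c x) (mkDerivation 𝕜 q p)) x := by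
  induction p using MvPolynomial.induction_on with
  | C a => simpa using hasDerivAt_const x a
  | add p r hp hr => simpa using hp.fun_add hr
  | mul_X p i hp => simpa [mkDerivation_X, add_comm, mul_comm] using hp.fun_mul (hc i)

/-- The jet `(f x, f' x, f'' x, …)`, the point at which differential polynomials are evaluated. -/
def jet [NontriviallyNormedField 𝕜] (f : 𝕜 → 𝕜) (x : 𝕜) (k : ℕ) : 𝕜 := iteratedDeriv k f x

theorem hasDerivAt_jet [NontriviallyNormedField 𝕜] {f : 𝕜 → 𝕜} (hf : ContDiff 𝕜 ∞ f) (k : ℕ)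
    (x : 𝕜) : HasDerivAt (fun y => jet f y k) (jet f x (k + 1)) x := by
  have hk := hf.differentiable_iteratedDeriv k (mod_cast ENat.natCast_lt_top k)
  simpa only [jet, iteratedDeriv_succ] using (hk x).hasDerivAt

theorem hasDerivAt_eval_jet [NontriviallyNormedField 𝕜] {f : 𝕜 → 𝕜} (hf : ContDiff 𝕜 ∞ f)
    (p : MvPolynomial ℕ 𝕜) (x : 𝕜) :
    HasDerivAt (fun y => eval (jet f y) p) (eval (jet f x) (totalDeriv p)) x :=
  hasDerivAt_eval_mkDerivation (fun k => by simpa only [eval_X] using hasDerivAt_jet hf k x) p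

variable [RCLike 𝕜] {u : 𝕜 → 𝕜 → 𝕜} {K : MvPolynomial ℕ 𝕜}

theorem hasDerivAt_jet_of_evolution (hu : ContDiff 𝕜 ∞ (Function.uncurry u))
    (hK : ∀ t x, HasDerivAt (fun s => u s x) (eval (jet (u t) x) K) t) (k : ℕ) (t x : 𝕜) :
    HasDerivAt (fun s => jet (u s) x k) (eval (jet (u t) x) (totalDeriv^[k] K)) t := by
  induction k generalizing t x with
  | zero => simpa [jet] using hK t x
  | succ k ih =>
    have hux (t : 𝕜) : ContDiff 𝕜 ∞ (u t) := hu.comp (contDiff_prodMk_right t)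
    have hjet : ContDiff 𝕜 2 (Function.uncurry fun t x => jet (u t) x k) :=
      contDiff_uncurry_iteratedDeriv k (mod_cast contDiff_infty.1 hu (2 + k))
    rw [Function.iterate_succ_apply']
    exact hasDerivAt_of_mixed_partial (H := fun t x => jet (u t) x (k + 1)) hjet ih
      (fun t x => hasDerivAt_jet (hux t) k x) (hasDerivAt_eval_jet (hux t) _ x)

theorem hasDerivAt_eval_jet_of_evolution (hu : ContDiff 𝕜 ∞ (Function.uncurry u))
    (hK : ∀ t x, HasDerivAt (fun s => u s x) (eval (jet (u t) x) K) t) (p : MvPolynomial ℕ 𝕜)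
    (t x : 𝕜) :
    HasDerivAt (fun s => eval (jet (u s) x) p) (eval (jet (u t) x) (evolutionDeriv K p)) t :=
  hasDerivAt_eval_mkDerivation (fun k => hasDerivAt_jet_of_evolution hu hK k t x) p

end Jet

theorem integral_eval_jet_eq_of_evolutionDeriv_eq_totalDeriv {u : ℝ → ℝ → ℝ}
    {K ρ φ : MvPolynomial ℕ ℝ} (hu : ContDiff ℝ ∞ (Function.uncurry u))
    (hdecay : ∀ k, LocUnifDecay fun t x => iteratedDeriv k (u t) x)
    (hK : ∀ t x, HasDerivAt (fun s => u s x) (eval (jet (u t) x) K) t)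
    (hρ : constantCoeff ρ = 0) (hρφ : evolutionDeriv K ρ = totalDeriv φ) (t s : ℝ) :
    ∫ x, eval (jet (u t) x) ρ = ∫ x, eval (jet (u s) x) ρ := by
  have hux (t : ℝ) : ContDiff ℝ ∞ (u t) := hu.comp (contDiff_prodMk_right t)
  have decay (p : MvPolynomial ℕ ℝ) :
      LocUnifDecay fun t x => eval (jet (u t) x) p - constantCoeff p :=
    .eval_sub_constantCoeff hdecay p
  have integrable (p : MvPolynomial ℕ ℝ) (t : ℝ) :
      Integrable fun x => eval (jet (u t) x) p - constantCoeff p := by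
    have hcont : Continuous fun x => eval (jet (u t) x) p :=
      continuous_iff_continuousAt.2 fun x => (hasDerivAt_eval_jet (hux t) p x).continuousAt
    exact (decay p).integrable (hcont.sub continuous_const).aestronglyMeasurable
  refine integral_eq_of_hasDerivAt_flux (G := fun t x => eval (jet (u t) x) (totalDeriv φ))
    (fun t => by simpa only [hρ, sub_zero] using integrable ρ t) (integrable φ)
    (fun t => ?_) (fun t x => ?_) (fun t x => (hasDerivAt_eval_jet (hux t) φ x).sub_const _) t s
  · simpa only [constantCoeff_totalDeriv, sub_zero]
      using (decay (totalDeriv φ)).exists_integrable_bound t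
  · simpa only [hρφ] using hasDerivAt_eval_jet_of_evolution hu hK ρ t x

/-- The right-hand side of the Korteweg–de Vries equation `∂ₜu = -∂ₓ³u - u ∂ₓu`. -/
def kdvField : MvPolynomial ℕ ℝ :=
  -X 3 - X 0 * X 1

/-- The density of the conserved integral after the Hamiltonian in the KdV hierarchy. -/
def kdvDensity : MvPolynomial ℕ ℝ :=
  X 2 ^ 2 - C (5 / 3) * X 0 * X 1 ^ 2 + C (5 / 36) * X 0 ^ 4

/-- The flux of `kdvDensity` along the KdV flow, found by integrating
`evolutionDeriv kdvField kdvDensity` by parts until the highest derivatives are exhausted. -/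
def kdvFlux : MvPolynomial ℕ ℝ :=
  X 3 ^ 2 - C 2 * X 2 * X 4 + C (10 / 3) * X 0 * X 1 * X 3 - C (8 / 3) * X 0 * X 2 ^ 2
    - C (5 / 3) * X 1 ^ 2 * X 2 - C (5 / 9) * X 0 ^ 3 * X 2 + C (5 / 2) * X 0 ^ 2 * X 1 ^ 2
    - C (1 / 9) * X 0 ^ 5

theorem evolutionDeriv_kdvDensity : evolutionDeriv kdvField kdvDensity = totalDeriv kdvFlux := by
  have evolution_zero : evolutionDeriv kdvField (X 0) = -X 3 - X 0 * X 1 :=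
    evolutionDeriv_X kdvField 0
  have evolution_one : evolutionDeriv kdvField (X 1) = -X 4 - X 1 ^ 2 - X 0 * X 2 := by
    simp only [evolutionDeriv_X, Function.iterate_one, kdvField, map_sub, map_neg,
      Derivation.leibniz, totalDeriv_X, smul_eq_mul]
    ring
  have evolution_two : evolutionDeriv kdvField (X 2) = -X 5 - 3 * X 1 * X 2 - X 0 * X 3 := by
    simp only [evolutionDeriv_X, Function.iterate_succ_apply, Function.iterate_zero_apply, kdvField,
      map_add, map_sub, map_neg, Derivation.leibniz, totalDeriv_X, smul_eq_mul]
    ring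
  -- Comparing values at real points lets `ring` combine the rational coefficients.
  refine MvPolynomial.funext fun z => ?_
  simp only [kdvDensity, kdvFlux, evolution_zero, evolution_one, evolution_two, totalDeriv_X,
    Derivation.leibniz, Derivation.leibniz_pow, derivation_C, smul_eq_mul, nsmul_eq_mul,
    Nat.cast_ofNat, map_add, map_sub, map_neg, map_mul, map_pow, map_zero, eval_X, eval_C,
    eval_ofNat]
  ring

theorem eval_jet_kdvDensity (f : ℝ → ℝ) (x : ℝ) : eval (jet f x) kdvDensity =
    iteratedDeriv 2 f x ^ 2 - 5 / 3 * f x * deriv f x ^ 2 + 5 / 36 * f x ^ 4 := by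
  simp [jet, kdvDensity]

theorem hasDerivAt_kdvField {u : ℝ → ℝ → ℝ} {t x : ℝ}
    (hu : DifferentiableAt ℝ (fun s => u s x) t)
    (eqn : deriv (fun s => u s x) t + iteratedDeriv 3 (u t) x + u t x * deriv (u t) x = 0) :
    HasDerivAt (fun s => u s x) (eval (jet (u t) x) kdvField) t := by
  refine hu.hasDerivAt.congr_deriv ?_
  simp only [kdvField, jet, map_sub, map_neg, map_mul, eval_X, iteratedDeriv_zero,
    iteratedDeriv_one]
  linarith

theorem kdv_third_conservation_law_general {u : ℝ → ℝ → ℝ}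
    (hu : ContDiff ℝ ∞ (Function.uncurry u))
    (eqn : ∀ t x, deriv (fun s => u s x) t + iteratedDeriv 3 (u t) x + u t x * deriv (u t) x = 0)
    (hdecay : ∀ k, LocUnifDecay fun t x => iteratedDeriv k (u t) x) (t s : ℝ) :
    ∫ x, (iteratedDeriv 2 (u t) x ^ 2 - 5 / 3 * u t x * deriv (u t) x ^ 2 + 5 / 36 * u t x ^ 4) =
      ∫ x, (iteratedDeriv 2 (u s) x ^ 2 - 5 / 3 * u s x * deriv (u s) x ^ 2
        + 5 / 36 * u s x ^ 4) := by
  have hK (t x : ℝ) : HasDerivAt (fun s => u s x) (eval (jet (u t) x) kdvField) t :=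
    hasDerivAt_kdvField ((hu.comp (contDiff_prodMk_left x)).differentiable (by simp) t) (eqn t x)
  simpa only [eval_jet_kdvDensity] using
    integral_eval_jet_eq_of_evolutionDeriv_eq_totalDeriv hu hdecay hK (by simp [kdvDensity])
      evolutionDeriv_kdvDensity t s

theorem KdVSolution.locUnifDecay_iteratedDeriv (U : KdVSolution) (k : ℕ) :
    LocUnifDecay fun t x => iteratedDeriv k (U.u t) x := by
  intro t
  obtain ⟨B, hB⟩ := U.decay (t - 1) (t + 1) 0 k 0
  obtain ⟨C, hC⟩ := U.decay (t - 1) (t + 1) 0 k 2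
  refine .of_bound (B + C) ?_
  rw [← principal_univ, eventually_prod_principal_iff]
  filter_upwards [Icc_mem_nhds (sub_one_lt t) (lt_add_one t)] with s hs x _
  have hBx : |iteratedDeriv k (U.u s) x| ≤ B := by simpa using hB s hs x
  have hCx : x ^ 2 * |iteratedDeriv k (U.u s) x| ≤ C := by simpa using hC s hs x
  rw [Real.norm_of_nonneg (by positivity : 0 ≤ (1 + x ^ 2)⁻¹), ← div_eq_mul_inv,
    le_div_iff₀ (by positivity)]
  change |iteratedDeriv k (U.u s) x| * (1 + x ^ 2) ≤ B + C
  linarith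

/-- Conservation of the next integral of the KdV hierarchy after the Hamiltonian:
`∫ (∂ₓ²u)² − (5/3) u (∂ₓu)² + (5/36) u⁴ dx` is constant in time. -/
theorem kdv_third_conservation_law (U : KdVSolution) (t : ℝ) :
    ∫ x : ℝ, ((iteratedDeriv 2 (fun y => U.u t y) x) ^ 2
        - (5/3) * U.u t x * (deriv (fun y => U.u t y) x) ^ 2
        + (5/36) * (U.u t x) ^ 4) =
      ∫ x : ℝ, ((iteratedDeriv 2 (fun y => U.u 0 y) x) ^ 2
        - (5/3) * U.u 0 x * (deriv (fun y => U.u 0 y) x) ^ 2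
        + (5/36) * (U.u 0 x) ^ 4) := by
  exact kdv_third_conservation_law_general U.smooth U.eqn U.locUnifDecay_iteratedDeriv t 0
end
end

section
/- Let m : ℝ → ℝ be an even function and let ξ₁, ξ₂, ξ₃, ξ₄ ∈ ℝ satisfy ξ₁ + ξ₂ + ξ₃ + ξ₄ = 0 and ξᵢ ≠ 0 for i = 1,2,3,4. Then −(1/2)·(1/24)·Σ_{σ ∈ S₄} [ 2·m(ξ_{σ(1)})²·ξ_{σ(1)} + m(ξ_{σ(3)}+ξ_{σ(4)})²·(ξ_{σ(3)}+ξ_{σ(4)}) ] / (3·ξ_{σ(1)}·ξ_{σ(2)}) = −(1/36)·(1/(ξ₁ξ₂ξ₃ξ₄))·{ ξ₁ξ₂ξ₃·[m(ξ₁)² + m(ξ₂)² + m(ξ₃)² − m(ξ₁+ξ₂)² − m(ξ₁+ξ₃)² − m(ξ₁+ξ₄)²] + ξ₁ξ₂ξ₄·[m(ξ₁)² + m(ξ₂)² + m(ξ₄)² − m(ξ₁+ξ₂)² − m(ξ₁+ξ₃)² − m(ξ₁+ξ₄)²] + ξ₁ξ₃ξ₄·[m(ξ₁)² + m(ξ₃)²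 + m(ξ₄)² − m(ξ₁+ξ₂)² − m(ξ₁+ξ₃)² − m(ξ₁+ξ₄)²] + ξ₂ξ₃ξ₄·[m(ξ₂)² + m(ξ₃)² + m(ξ₄)² − m(ξ₁+ξ₂)² − m(ξ₁+ξ₃)² − m(ξ₁+ξ₄)²] }. -/
/-!
Since `ξ_c + ξ_d = -(ξ_a + ξ_b)` for complementary pairs, evenness of `w = m²` turns each term of
the symmetrization into `(2 w(ξ_a) / ξ_b - w(ξ_a + ξ_b) (1 / ξ_a + 1 / ξ_b)) / 3`, a function of
two indices only. Collecting the coefficient of `1 / ξ_j` leaves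
`∑ i ≠ j, w(ξ_i) - ∑ i ≠ j, w(ξ_i + ξ_j)`. The last sum does not depend on `j`: the three pairs
through `j` represent the three splittings of four indices into complementary pairs.
-/

section PermSums

open scoped Nat

variable {M : Type*} [AddCommMonoid M]

theorem sum_perm_apply_zero {n : ℕ} (f : Fin (n + 1) → M) :
    ∑ σ : Equiv.Perm (Fin (n + 1)), f (σ 0) = n ! • ∑ i, f i := by
  rw [← Equiv.Perm.decomposeFin.symm.sum_comp, Fintype.sum_prod_type, Finset.smul_sum]
  simp [Fintype.card_perm]

theorem sum_swap_zero_succ {n : ℕ} (f : Fin (n + 1) → M) (i : Fin (n + 1)) :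
    ∑ k : Fin n, f (Equiv.swap 0 i k.succ) = ∑ j ∈ {i}ᶜ, f j :=
  calc ∑ k : Fin n, f (Equiv.swap 0 i k.succ)
      = ∑ j ∈ {0}ᶜ, f (Equiv.swap 0 i j) := by
        rw [← Fin.image_succ_univ, Finset.sum_image (Fin.succ_injective n).injOn]
    _ = ∑ j ∈ {i}ᶜ, f j :=
        Finset.sum_equiv (Equiv.swap 0 i) (by simp [Equiv.swap_apply_eq_iff]) fun _ _ ↦ rfl

theorem sum_perm_apply_zero_one {n : ℕ} (f : Fin (n + 2) → Fin (n + 2) → M) :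
    ∑ σ : Equiv.Perm (Fin (n + 2)), f (σ 0) (σ 1) = n ! • ∑ i, ∑ j ∈ {i}ᶜ, f i j := by
  rw [← Equiv.Perm.decomposeFin.symm.sum_comp, Fintype.sum_prod_type, Finset.smul_sum]
  refine Finset.sum_congr rfl fun i _ ↦ ?_
  simp only [Equiv.Perm.decomposeFin_symm_apply_zero, Equiv.Perm.decomposeFin_symm_apply_one]
  rw [sum_perm_apply_zero fun k ↦ f i (Equiv.swap 0 i k.succ), sum_swap_zero_succ (f i)]

end PermSums

theorem sum_compl_singleton_comm {ι M : Type*} [Fintype ι] [DecidableEq ι] [AddCommMonoid M]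
    (f : ι → ι → M) : ∑ i, ∑ j ∈ {i}ᶜ, f i j = ∑ j, ∑ i ∈ {j}ᶜ, f i j :=
  Finset.sum_comm' (by simp [eq_comm])

theorem sum_two_mul_sub_symm_mul_add {ι R : Type*} [Fintype ι] [DecidableEq ι] [CommRing R]
    (u v : ι → R) {s : ι → ι → R} (hs : ∀ i j, s i j = s j i) :
    ∑ i, ∑ j ∈ {i}ᶜ, (2 * u i * v j - s i j * (v i + v j)) =
      2 * ∑ j, v j * (∑ i ∈ {j}ᶜ, u i - ∑ i ∈ {j}ᶜ, s i j) := by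
  have hsymm : ∑ i, ∑ j ∈ {i}ᶜ, s i j * v i = ∑ i, ∑ j ∈ {i}ᶜ, s i j * v j := by
    rw [sum_compl_singleton_comm]
    simp only [hs]
  calc ∑ i, ∑ j ∈ {i}ᶜ, (2 * u i * v j - s i j * (v i + v j))
      = 2 * ∑ i, ∑ j ∈ {i}ᶜ, u i * v j -
          (∑ i, ∑ j ∈ {i}ᶜ, s i j * v i + ∑ i, ∑ j ∈ {i}ᶜ, s i j * v j) := by
        simp only [mul_add, Finset.sum_sub_distrib, Finset.sum_add_distrib, Finset.mul_sum,
          mul_assoc]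
    _ = 2 * ∑ i, ∑ j ∈ {i}ᶜ, v j * (u i - s i j) := by
        rw [hsymm, ← two_mul, ← mul_sub]
        simp only [← Finset.sum_sub_distrib, mul_comm (v _), sub_mul]
    _ = 2 * ∑ j, v j * (∑ i ∈ {j}ᶜ, u i - ∑ i ∈ {j}ᶜ, s i j) := by
        rw [sum_compl_singleton_comm]
        simp only [← Finset.sum_sub_distrib, Finset.mul_sum]

theorem sum_compl_singleton_eq_sum_succAbove {n : ℕ} {M : Type*} [AddCommMonoid M]
    (f : Fin (n + 1) → M) (i : Fin (n + 1)) : ∑ j ∈ {i}ᶜ, f j = ∑ k, f (i.succAbove k) := by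
  rw [← Fin.image_succAbove_univ, Finset.sum_image Fin.succAbove_right_injective.injOn]

theorem apply_eq_of_even_of_add_eq_zero {G β : Type*} [AddGroup G] {w : G → β} (hw : w.Even)
    {a b : G} (h : a + b = 0) : w a = w b := by
  rw [eq_neg_of_add_eq_zero_left h, hw]

theorem sum_pair_sums_eq_of_even {G M : Type*} [AddCommGroup G] [AddCommMonoid M] {w : G → M}
    (hw : w.Even) {ξ : Fin 4 → G} (hξ : ∑ i, ξ i = 0) (j : Fin 4) :
    ∑ i ∈ {j}ᶜ, w (ξ i + ξ j) = w (ξ 0 + ξ 1) + w (ξ 0 + ξ 2) + w (ξ 0 + ξ 3) := by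
  rw [Fin.sum_univ_four] at hξ
  have h12 : w (ξ 1 + ξ 2) = w (ξ 0 + ξ 3) :=
    apply_eq_of_even_of_add_eq_zero hw (by rw [← hξ]; abel)
  have h13 : w (ξ 1 + ξ 3) = w (ξ 0 + ξ 2) :=
    apply_eq_of_even_of_add_eq_zero hw (by rw [← hξ]; abel)
  have h23 : w (ξ 2 + ξ 3) = w (ξ 0 + ξ 1) :=
    apply_eq_of_even_of_add_eq_zero hw (by rw [← hξ]; abel)
  rw [sum_compl_singleton_eq_sum_succAbove, Fin.sum_univ_three]
  match j with
  | 0 =>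
    change w (ξ 1 + ξ 0) + w (ξ 2 + ξ 0) + w (ξ 3 + ξ 0) = _
    rw [add_comm (ξ 1), add_comm (ξ 2), add_comm (ξ 3)]
  | 1 =>
    change w (ξ 0 + ξ 1) + w (ξ 2 + ξ 1) + w (ξ 3 + ξ 1) = _
    rw [add_comm (ξ 2), add_comm (ξ 3), h12, h13, add_right_comm]
  | 2 =>
    change w (ξ 0 + ξ 2) + w (ξ 1 + ξ 2) + w (ξ 3 + ξ 2) = _
    rw [add_comm (ξ 3), h12, h23]
    abel
  | 3 =>
    change w (ξ 0 + ξ 3) + w (ξ 1 + ξ 3) + w (ξ 2 + ξ 3) = _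
    rw [h13, h23]
    abel

section Multiplier

variable {K : Type*} [Field K] {w : K → K}

theorem M4_term_eq_of_sum_eq_zero (hw : w.Even) {a b c d : K} (hsum : a + b + c + d = 0)
    (ha : a ≠ 0) (hb : b ≠ 0) :
    (2 * w a * a + w (c + d) * (c + d)) / (3 * a * b) =
      (2 * w a * b⁻¹ - w (a + b) * (a⁻¹ + b⁻¹)) / 3 := by
  have hcd : c + d = -(a + b) := by linear_combination hsum
  rw [hcd, hw, mul_assoc 3, mul_comm 3, ← div_div]
  congr 1
  field_simp
  ring

theorem sum_perm_M4_term (hw : w.Even) {ξ : Fin 4 → K} (hsum : ∑ i, ξ i = 0)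
    (hξ : ∀ i, ξ i ≠ 0) :
    ∑ σ : Equiv.Perm (Fin 4),
        (2 * w (ξ (σ 0)) * ξ (σ 0) + w (ξ (σ 2) + ξ (σ 3)) * (ξ (σ 2) + ξ (σ 3))) /
          (3 * ξ (σ 0) * ξ (σ 1)) =
      4 / 3 * ∑ j, (ξ j)⁻¹ *
        (∑ i ∈ {j}ᶜ, w (ξ i) - (w (ξ 0 + ξ 1) + w (ξ 0 + ξ 2) + w (ξ 0 + ξ 3))) := by
  have hsum_perm (σ : Equiv.Perm (Fin 4)) : ξ (σ 0) + ξ (σ 1) + ξ (σ 2) + ξ (σ 3) = 0 := by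
    rw [← hsum, ← Equiv.sum_comp σ ξ, Fin.sum_univ_four]
  calc ∑ σ : Equiv.Perm (Fin 4),
        (2 * w (ξ (σ 0)) * ξ (σ 0) + w (ξ (σ 2) + ξ (σ 3)) * (ξ (σ 2) + ξ (σ 3))) /
          (3 * ξ (σ 0) * ξ (σ 1))
      = (∑ σ : Equiv.Perm (Fin 4), (2 * w (ξ (σ 0)) * (ξ (σ 1))⁻¹ -
          w (ξ (σ 0) + ξ (σ 1)) * ((ξ (σ 0))⁻¹ + (ξ (σ 1))⁻¹))) / 3 := by
        rw [Finset.sum_div]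
        exact Finset.sum_congr rfl fun σ _ ↦
          M4_term_eq_of_sum_eq_zero hw (hsum_perm σ) (hξ _) (hξ _)
    _ = (2 * ∑ i, ∑ j ∈ {i}ᶜ,
          (2 * w (ξ i) * (ξ j)⁻¹ - w (ξ i + ξ j) * ((ξ i)⁻¹ + (ξ j)⁻¹))) / 3 := by
        rw [sum_perm_apply_zero_one fun i j ↦
          2 * w (ξ i) * (ξ j)⁻¹ - w (ξ i + ξ j) * ((ξ i)⁻¹ + (ξ j)⁻¹)]
        simp
    _ = 4 / 3 * ∑ j, (ξ j)⁻¹ * (∑ i ∈ {j}ᶜ, w (ξ i) - ∑ i ∈ {j}ᶜ, w (ξ i + ξ j)) := by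
        rw [sum_two_mul_sub_symm_mul_add (fun i ↦ w (ξ i)) (fun i ↦ (ξ i)⁻¹)
          fun i j ↦ by rw [add_comm (ξ i)]]
        ring
    _ = 4 / 3 * ∑ j, (ξ j)⁻¹ *
          (∑ i ∈ {j}ᶜ, w (ξ i) - (w (ξ 0 + ξ 1) + w (ξ 0 + ξ 2) + w (ξ 0 + ξ 3))) := by
        simp only [sum_pair_sums_eq_of_even hw hsum]

theorem M4_explicit_formula_general [NeZero (2 : K)] [NeZero (3 : K)] (hw : w.Even)
    {ξ₁ ξ₂ ξ₃ ξ₄ : K} (hsum : ξ₁ + ξ₂ + ξ₃ + ξ₄ = 0)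
    (h₁ : ξ₁ ≠ 0) (h₂ : ξ₂ ≠ 0) (h₃ : ξ₃ ≠ 0) (h₄ : ξ₄ ≠ 0) :
    -(1/2 : K) * (1/24) * ∑ σ : Equiv.Perm (Fin 4),
        (2 * w (![ξ₁, ξ₂, ξ₃, ξ₄] (σ 0)) * ![ξ₁, ξ₂, ξ₃, ξ₄] (σ 0)
            + w (![ξ₁, ξ₂, ξ₃, ξ₄] (σ 2) + ![ξ₁, ξ₂, ξ₃, ξ₄] (σ 3)) *
                (![ξ₁, ξ₂, ξ₃, ξ₄] (σ 2) + ![ξ₁, ξ₂, ξ₃, ξ₄] (σ 3))) /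
          (3 * ![ξ₁, ξ₂, ξ₃, ξ₄] (σ 0) * ![ξ₁, ξ₂, ξ₃, ξ₄] (σ 1)) =
      -(1/36 : K) * (1 / (ξ₁ * ξ₂ * ξ₃ * ξ₄)) *
        (ξ₁ * ξ₂ * ξ₃ * (w ξ₁ + w ξ₂ + w ξ₃
            - w (ξ₁ + ξ₂) - w (ξ₁ + ξ₃) - w (ξ₁ + ξ₄))
          + ξ₁ * ξ₂ * ξ₄ * (w ξ₁ + w ξ₂ + w ξ₄
            - w (ξ₁ + ξ₂) - w (ξ₁ + ξ₃) - w (ξ₁ + ξ₄))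
          + ξ₁ * ξ₃ * ξ₄ * (w ξ₁ + w ξ₃ + w ξ₄
            - w (ξ₁ + ξ₂) - w (ξ₁ + ξ₃) - w (ξ₁ + ξ₄))
          + ξ₂ * ξ₃ * ξ₄ * (w ξ₂ + w ξ₃ + w ξ₄
            - w (ξ₁ + ξ₂) - w (ξ₁ + ξ₃) - w (ξ₁ + ξ₄))) := by
  have hcoeff : -(1 / 2 : K) * (1 / 24) * (4 / 3) = -(1 / 36) := by
    have h2 : (2 : K) ≠ 0 := two_ne_zero
    have h3 : (3 : K) ≠ 0 := three_ne_zero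
    rw [show (24 : K) = 2 ^ 3 * 3 by norm_num, show (36 : K) = 2 ^ 2 * 3 ^ 2 by norm_num]
    field_simp
    norm_num
  rw [sum_perm_M4_term hw (by simpa [Fin.sum_univ_four] using hsum)
    (by simp [Fin.forall_fin_succ, h₁, h₂, h₃, h₄]), ← mul_assoc, hcoeff, mul_assoc]
  congr 1
  simp only [Fin.sum_univ_four, sum_compl_singleton_eq_sum_succAbove, Fin.sum_univ_three]
  set W := w (ξ₁ + ξ₂) + w (ξ₁ + ξ₃) + w (ξ₁ + ξ₄) with hW
  change ξ₁⁻¹ * (w ξ₂ + w ξ₃ + w ξ₄ - W) + ξ₂⁻¹ * (w ξ₁ + w ξ₃ + w ξ₄ - W) +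
    ξ₃⁻¹ * (w ξ₁ + w ξ₂ + w ξ₄ - W) + ξ₄⁻¹ * (w ξ₁ + w ξ₂ + w ξ₃ - W) = _
  rw [hW]
  field_simp
  ring

end Multiplier

/-- Explicit closed form of the symmetrized 4-multiplier
`M₄ = −(1/2)[(2 m(ξ₁)² ξ₁ + m(ξ₃+ξ₄)² (ξ₃+ξ₄))/(3 ξ₁ ξ₂)]_sym` arising in the
modified-energy construction for KdV, on the hyperplane `ξ₁+ξ₂+ξ₃+ξ₄ = 0` away
from the coordinate hyperplanes, for any even `m : ℝ → ℝ`. -/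
theorem M4_explicit_formula (m : ℝ → ℝ) (hm : ∀ x : ℝ, m (-x) = m x)
    (ξ₁ ξ₂ ξ₃ ξ₄ : ℝ) (hsum : ξ₁ + ξ₂ + ξ₃ + ξ₄ = 0)
    (h₁ : ξ₁ ≠ 0) (h₂ : ξ₂ ≠ 0) (h₃ : ξ₃ ≠ 0) (h₄ : ξ₄ ≠ 0) :
    -(1/2 : ℝ) * (1/24) * ∑ σ : Equiv.Perm (Fin 4),
        (2 * m (![ξ₁, ξ₂, ξ₃, ξ₄] (σ 0)) ^ 2 * ![ξ₁, ξ₂, ξ₃, ξ₄] (σ 0)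
            + m (![ξ₁, ξ₂, ξ₃, ξ₄] (σ 2) + ![ξ₁, ξ₂, ξ₃, ξ₄] (σ 3)) ^ 2 *
                (![ξ₁, ξ₂, ξ₃, ξ₄] (σ 2) + ![ξ₁, ξ₂, ξ₃, ξ₄] (σ 3))) /
          (3 * ![ξ₁, ξ₂, ξ₃, ξ₄] (σ 0) * ![ξ₁, ξ₂, ξ₃, ξ₄] (σ 1)) =
      -(1/36 : ℝ) * (1 / (ξ₁ * ξ₂ * ξ₃ * ξ₄)) *
        (ξ₁ * ξ₂ * ξ₃ * (m ξ₁ ^ 2 + m ξ₂ ^ 2 + m ξ₃ ^ 2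
            - m (ξ₁ + ξ₂) ^ 2 - m (ξ₁ + ξ₃) ^ 2 - m (ξ₁ + ξ₄) ^ 2)
          + ξ₁ * ξ₂ * ξ₄ * (m ξ₁ ^ 2 + m ξ₂ ^ 2 + m ξ₄ ^ 2
            - m (ξ₁ + ξ₂) ^ 2 - m (ξ₁ + ξ₃) ^ 2 - m (ξ₁ + ξ₄) ^ 2)
          + ξ₁ * ξ₃ * ξ₄ * (m ξ₁ ^ 2 + m ξ₃ ^ 2 + m ξ₄ ^ 2
            - m (ξ₁ + ξ₂) ^ 2 - m (ξ₁ + ξ₃) ^ 2 - m (ξ₁ + ξ₄) ^ 2)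
          + ξ₂ * ξ₃ * ξ₄ * (m ξ₂ ^ 2 + m ξ₃ ^ 2 + m ξ₄ ^ 2
            - m (ξ₁ + ξ₂) ^ 2 - m (ξ₁ + ξ₃) ^ 2 - m (ξ₁ + ξ₄) ^ 2)) :=
  M4_explicit_formula_general (w := fun x ↦ m x ^ 2) (fun x ↦ by simp only [hm])
    hsum h₁ h₂ h₃ h₄
end
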